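/- Let E be a finite-dimensional real normed vector space, let X1, X2 : E → E be C^∞ vector fields and θ : E → ℝ a C^∞ function. Define the rotated vector fields Y1 = (cos θ)·X1 − (sin θ)·X2 and Y2 = (sin θ)·X1 + (cos θ)·X2 (pointwise scalar multiples). Then the Lie bracket satisfies, at every point of E, [Y2, Y1] = [X2, X1] − X1(θ)·X1 − X2(θ)·X2, where X(θ) denotes the directional derivative p ↦ Dθ(p)(X(p)). -/

import Mathlib

/-- The Lie bracket of two vector fields on a normed vector space:
`[X, Y](p) = DY(p)(X(p)) − DX(p)(Y(p))`. -/
noncomputable def vlie {E : Type*} [NormedAddCommGroup E] [NormedSpace ℝ E]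
    (X Y : E → E) : E → E :=
  fun p => fderiv ℝ Y p (X p) - fderiv ℝ X p (Y p)

/-!
By the Leibniz rule, the bracket of two combinations of `X1` and `X2` is the determinant of the
coefficients times `[X1, X2]`, plus terms in which one combination differentiates the coefficients
of the other. The ordered pair `(Y2, Y1)` arises from `(X2, X1)` by a rotation, of determinant one,
and differentiating coefficients along `Z` turns `Y1` into `-Z(θ) Y2` and `Y2` into `Z(θ) Y1`, so
`[Y2, Y1] = [X2, X1] - Y1(θ) Y1 - Y2(θ) Y2`. Finally `Y1(θ) Y1 + Y2(θ) Y2` is the sum of the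
diagonal values of the bilinear map `(u, v) ↦ dθ(u) v` on the rotated frame, and such a sum is
invariant under rotation.
-/

open VectorField

section LinearAlgebra

variable {R M N : Type*} [CommRing R] [AddCommGroup M] [Module R M] [AddCommGroup N] [Module R N]

lemma bilin_self_add_self_rotate (B : M →ₗ[R] M →ₗ[R] N) {c s : R} (hcs : c ^ 2 + s ^ 2 = 1)
    (u v : M) :
    B (c • u - s • v) (c • u - s • v) + B (s • u + c • v) (s • u + c • v) = B u u + B v v := by
  simp only [map_add, map_sub, map_smul, LinearMap.add_apply, LinearMap.sub_apply,
    LinearMap.smul_apply]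
  linear_combination (norm := module) hcs • (B u u + B v v)

end LinearAlgebra

section Leibniz

variable {𝕜 E : Type*} [NontriviallyNormedField 𝕜] [NormedAddCommGroup E] [NormedSpace 𝕜 E]
  {X Y V W : E → E} {a b c d : E → 𝕜} {p : E}

lemma lieBracket_smul_add_smul_right (hX : DifferentiableAt 𝕜 X p) (hY : DifferentiableAt 𝕜 Y p)
    (hc : DifferentiableAt 𝕜 c p) (hd : DifferentiableAt 𝕜 d p) :
    lieBracket 𝕜 V (fun q ↦ c q • X q + d q • Y q) p =
      c p • lieBracket 𝕜 V X p + d p • lieBracket 𝕜 V Y p +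
        (fderiv 𝕜 c p (V p) • X p + fderiv 𝕜 d p (V p) • Y p) := by
  have h_add := lieBracket_add_right (V := V) (hc.fun_smul hX) (hd.fun_smul hY)
  rw [lieBracket_smul_right hc hX, lieBracket_smul_right hd hY] at h_add
  exact h_add.trans (by abel)

lemma lieBracket_smul_add_smul_left (hX : DifferentiableAt 𝕜 X p) (hY : DifferentiableAt 𝕜 Y p)
    (ha : DifferentiableAt 𝕜 a p) (hb : DifferentiableAt 𝕜 b p) :
    lieBracket 𝕜 (fun q ↦ a q • X q + b q • Y q) W p =
      a p • lieBracket 𝕜 X W p + b p • lieBracket 𝕜 Y W p -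
        (fderiv 𝕜 a p (W p) • X p + fderiv 𝕜 b p (W p) • Y p) := by
  rw [lieBracket_swap, lieBracket_smul_add_smul_right hX hY ha hb, lieBracket_swap (V := W),
    lieBracket_swap (V := W)]
  module

lemma lieBracket_smul_add_smul (hX : DifferentiableAt 𝕜 X p) (hY : DifferentiableAt 𝕜 Y p)
    (ha : DifferentiableAt 𝕜 a p) (hb : DifferentiableAt 𝕜 b p)
    (hc : DifferentiableAt 𝕜 c p) (hd : DifferentiableAt 𝕜 d p) :
    lieBracket 𝕜 (fun q ↦ a q • X q + b q • Y q) (fun q ↦ c q • X q + d q • Y q) p =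
      (a p * d p - b p * c p) • lieBracket 𝕜 X Y p +
        (fderiv 𝕜 c p (a p • X p + b p • Y p) • X p +
          fderiv 𝕜 d p (a p • X p + b p • Y p) • Y p) -
        (fderiv 𝕜 a p (c p • X p + d p • Y p) • X p +
          fderiv 𝕜 b p (c p • X p + d p • Y p) • Y p) := by
  rw [lieBracket_smul_add_smul_left hX hY ha hb, lieBracket_smul_add_smul_right hX hY hc hd,
    lieBracket_smul_add_smul_right hX hY hc hd, lieBracket_swap (V := Y) (W := X)]
  simp only [lieBracket_self, Pi.zero_apply, map_add, map_smul, smul_eq_mul]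
  module

end Leibniz

section Rotation

variable {E : Type*} [NormedAddCommGroup E] [NormedSpace ℝ E]

lemma vlie_eq_lieBracket (X Y : E → E) : vlie X Y = lieBracket ℝ X Y := rfl

lemma lieBracket_rotate {X₁ X₂ : E → E} {θ : E → ℝ} {p : E} (hX₁ : DifferentiableAt ℝ X₁ p)
    (hX₂ : DifferentiableAt ℝ X₂ p) (hθ : DifferentiableAt ℝ θ p)
    {Y₁ Y₂ : E → E} (hY₁ : Y₁ = fun q ↦ Real.cos (θ q) • X₁ q - Real.sin (θ q) • X₂ q)
    (hY₂ : Y₂ = fun q ↦ Real.sin (θ q) • X₁ q + Real.cos (θ q) • X₂ q) :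
    lieBracket ℝ Y₂ Y₁ p =
      lieBracket ℝ X₂ X₁ p - (fderiv ℝ θ p (Y₁ p) • Y₁ p + fderiv ℝ θ p (Y₂ p) • Y₂ p) := by
  have hY₁' : Y₁ = fun q ↦ Real.cos (θ q) • X₁ q + (-Real.sin (θ q)) • X₂ q := by
    simp only [hY₁, neg_smul, sub_eq_add_neg]
  have hdet : Real.sin (θ p) * -Real.sin (θ p) - Real.cos (θ p) * Real.cos (θ p) = -1 := by
    linear_combination -Real.sin_sq_add_cos_sq (θ p)
  have hbracket := lieBracket_smul_add_smul hX₁ hX₂ hθ.sin hθ.cos hθ.cos hθ.sin.fun_neg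
  rw [hdet, neg_one_smul, ← lieBracket_swap] at hbracket
  rw [hY₁', hY₂, hbracket, fderiv_fun_neg, fderiv_sin hθ, fderiv_cos hθ]
  simp only [neg_apply, smul_apply, smul_eq_mul]
  module

end Rotation

theorem rotated_frame_lie_bracket_general
    {E : Type*} [NormedAddCommGroup E] [NormedSpace ℝ E]
    (X1 X2 : E → E) (θ : E → ℝ) (p : E)
    (hX1 : DifferentiableAt ℝ X1 p) (hX2 : DifferentiableAt ℝ X2 p)
    (hθ : DifferentiableAt ℝ θ p)
    (Y1 Y2 : E → E)
    (hY1 : Y1 = fun q ↦ Real.cos (θ q) • X1 q - Real.sin (θ q) • X2 q)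
    (hY2 : Y2 = fun q ↦ Real.sin (θ q) • X1 q + Real.cos (θ q) • X2 q) :
    vlie Y2 Y1 p =
      vlie X2 X1 p - fderiv ℝ θ p (X1 p) • X1 p - fderiv ℝ θ p (X2 p) • X2 p := by
  have htrace : fderiv ℝ θ p (Y1 p) • Y1 p + fderiv ℝ θ p (Y2 p) • Y2 p =
      fderiv ℝ θ p (X1 p) • X1 p + fderiv ℝ θ p (X2 p) • X2 p := by
    rw [hY1, hY2]
    exact bilin_self_add_self_rotate (LinearMap.lsmul ℝ E ∘ₗ (fderiv ℝ θ p).toLinearMap)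
      (Real.cos_sq_add_sin_sq (θ p)) (X1 p) (X2 p)
  rw [vlie_eq_lieBracket, vlie_eq_lieBracket, lieBracket_rotate hX1 hX2 hθ hY1 hY2, htrace,
    sub_add_eq_sub_sub]

/-- rotating a pair of smooth vector fields by a smooth angle `θ`
changes the Lie bracket as `[Y2, Y1] = [X2, X1] − X1(θ)·X1 − X2(θ)·X2`. -/
theorem rotated_frame_lie_bracket
    {E : Type*} [NormedAddCommGroup E] [NormedSpace ℝ E] [FiniteDimensional ℝ E]
    (X1 X2 : E → E) (θ : E → ℝ)
    (hX1 : ContDiff ℝ (⊤ : ℕ∞) X1) (hX2 : ContDiff ℝ (⊤ : ℕ∞) X2)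
    (hθ : ContDiff ℝ (⊤ : ℕ∞) θ)
    (Y1 Y2 : E → E)
    (hY1 : Y1 = fun p => Real.cos (θ p) • X1 p - Real.sin (θ p) • X2 p)
    (hY2 : Y2 = fun p => Real.sin (θ p) • X1 p + Real.cos (θ p) • X2 p) :
    ∀ p : E, vlie Y2 Y1 p =
      vlie X2 X1 p - (fderiv ℝ θ p (X1 p)) • X1 p - (fderiv ℝ θ p (X2 p)) • X2 p :=
  fun p ↦ rotated_frame_lie_bracket_general X1 X2 θ p (hX1.differentiable (by simp) p)
    (hX2.differentiable (by simp) p) (hθ.differentiable (by simp) p) Y1 Y2 hY1 hY2
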